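/- Let A and B be real n×n stable matrices with A − B of rank one. Then the pair (A,B) does NOT have a common quadratic Lyapunov function if and only if there exist nonzero vectors v, w ∈ ℝⁿ such that A·v·vᵀ + v·vᵀ·Aᵀ + B·w·wᵀ + w·wᵀ·Bᵀ = 0. -/

import Mathlib

open Matrix

/-- A real square matrix is *stable* if every eigenvalue (over ℂ) has negative real part. -/
def IsStable {n : ℕ} (A : Matrix (Fin n) (Fin n) ℝ) : Prop :=
  ∀ μ : ℂ, μ ∈ spectrum ℂ (A.map (algebraMap ℝ ℂ)) → μ.re < 0

/-- `(A,B)` has a common quadratic Lyapunov function: a real symmetric positive definite `P`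
with `P·A + Aᵀ·P` and `P·B + Bᵀ·P` both negative definite. -/
def HasCQLF {n : ℕ} (A B : Matrix (Fin n) (Fin n) ℝ) : Prop :=
  ∃ P : Matrix (Fin n) (Fin n) ℝ,
    P.PosDef ∧ (-(P * A + Aᵀ * P)).PosDef ∧ (-(P * B + Bᵀ * P)).PosDef

/-!
If positive semidefinite `X`, `Y` solve `A X + X Aᵀ + B Y + Y Bᵀ = 0` only trivially, separating `0`
from the values of the left side on pairs of total trace one gives a symmetric `P` satisfying both
Lyapunov inequalities, and `P` is positive definite because `A` is stable. So without a CQLF there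
is a nontrivial solution. Write `A - B = b cᵀ` and choose `u` with `(X + Y) u = Y c`. Then
`Z = X + Y` satisfies `F Z + Z Fᵀ = 0` for `F = A - b uᵀ`, so `Z` is a sum of matrices `z zᴴ` with
`F z = iω z`, and positivity of `X` and `Y` makes the frequency response `y = (A - iω)⁻¹ b` satisfy
`Re cᵀ y ≥ 1` for at least one of these `ω`. As
`det (ω² + A B) = det (ω² + A²) (1 - Re cᵀ y) ≤ 0`, the product `A B` has a negative eigenvalue
`-t`; if `A B w = -t w`, then `v = t^(-1/2) B w` and `w` are the required vectors. Conversely, the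
trace of such an identity against a CQLF `P` would be negative.
-/

section Lyapunov

variable {n R : Type*} [Fintype n] [CommRing R]

theorem trace_mul_vecMulVec (M : Matrix n n R) (x y : n → R) :
    (M * vecMulVec x y).trace = y ⬝ᵥ M *ᵥ x := by
  rw [mul_vecMulVec, trace_vecMulVec, dotProduct_comm]

variable [StarRing R]

theorem mul_conjTranspose_self_eq_sum_vecMulVec {m : Type*} (W : Matrix m n R) :
    W * Wᴴ = ∑ k, vecMulVec (W.col k) (star (W.col k)) := by
  ext i j
  simp [mul_apply, Matrix.sum_apply, vecMulVec_apply]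

/-- The Lyapunov operator `X ↦ A X + X Aᴴ` of a square matrix `A`. Its adjoint for the pairing
`(P, X) ↦ tr (P X)` is `lyapunov Aᴴ`, which sends `P` to `Aᴴ P + P A`; over `ℝ` this is the matrix
required to be negative definite in `HasCQLF`. -/
def lyapunov (A : Matrix n n R) : Matrix n n R →ₗ[R] Matrix n n R :=
  LinearMap.mulLeft R A + LinearMap.mulRight R Aᴴ

theorem lyapunov_apply (A X : Matrix n n R) : lyapunov A X = A * X + X * Aᴴ := rfl

theorem lyapunov_neg_one [DecidableEq n] (X : Matrix n n R) : lyapunov (-1) X = -((2 : R) • X) := by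
  simp [lyapunov_apply, two_smul]

theorem isHermitian_lyapunov (A : Matrix n n R) {X : Matrix n n R} (hX : X.IsHermitian) :
    (lyapunov A X).IsHermitian := by
  rw [IsHermitian, lyapunov_apply, conjTranspose_add, conjTranspose_mul, conjTranspose_mul,
    conjTranspose_conjTranspose, hX.eq, add_comm]

theorem trace_mul_lyapunov (P A X : Matrix n n R) :
    (P * lyapunov A X).trace = (lyapunov Aᴴ P * X).trace := by
  rw [lyapunov_apply, lyapunov_apply, conjTranspose_conjTranspose, mul_add, add_mul, trace_add,
    trace_add, ← mul_assoc, ← mul_assoc, trace_mul_comm (P * X), ← mul_assoc, add_comm]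

end Lyapunov

section FullRankFactorization

open scoped ComplexOrder

variable {n m 𝕜 : Type*} [Fintype n] [Fintype m] [RCLike 𝕜]

theorem exists_full_rank_factorization {Z : Matrix n n 𝕜} (hZ : Z.PosSemidef) :
    ∃ (r : ℕ) (S : Matrix n (Fin r) 𝕜) (L : Matrix (Fin r) n 𝕜), Z = S * Sᴴ ∧ L * S = 1 := by
  classical
  set d := hZ.1.eigenvalues
  let U : Matrix n n 𝕜 := ↑hZ.1.eigenvectorUnitary
  let root : n → 𝕜 := fun i => (√(d i) : ℝ)
  let e : {i // d i ≠ 0} ≃ Fin _ := Fintype.equivFin _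
  let g : Fin _ → n := fun k => e.symm k
  have hg : Function.Injective g := Subtype.val_injective.comp e.symm.injective
  have hUU : Uᴴ * U = 1 := Unitary.coe_star_mul_self hZ.1.eigenvectorUnitary
  have hroot_ne (k) : root (g k) ≠ 0 := by
    simpa [root] using Real.sqrt_ne_zero'.2 ((hZ.eigenvalues_nonneg _).lt_of_ne' (e.symm k).2)
  have hZroot : Z = U * diagonal root * (U * diagonal root)ᴴ := by
    have hsq : diagonal root * (diagonal root)ᴴ = diagonal (RCLike.ofReal ∘ d) := by
      rw [diagonal_conjTranspose, diagonal_mul_diagonal]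
      congr 1 with i
      simp [root, ← RCLike.ofReal_mul, Real.mul_self_sqrt (hZ.eigenvalues_nonneg i), d]
    rw [conjTranspose_mul, Matrix.mul_assoc, ← Matrix.mul_assoc (diagonal root), hsq,
      ← Matrix.mul_assoc]
    exact hZ.1.spectral_theorem
  refine ⟨_, (U * diagonal root).submatrix id g, (diagonal root⁻¹ * Uᴴ).submatrix g id, ?_, ?_⟩
  · nth_rw 1 [hZroot]
    ext i j
    refine (Fintype.sum_of_injective g hg _ _ (fun k hk => ?_) fun _ => rfl).symm
    have hd : d k = 0 := by
      by_contra h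
      exact hk ⟨e ⟨k, h⟩, by simp [g]⟩
    simp [root, hd]
  · rw [← submatrix_mul _ _ g id g Function.bijective_id, Matrix.mul_assoc, ← Matrix.mul_assoc Uᴴ,
      hUU, Matrix.one_mul, diagonal_mul_diagonal, submatrix_diagonal _ _ hg, ← diagonal_one]
    congr 1 with k
    simp [hroot_ne k]

variable [DecidableEq m]

theorem mul_mul_eq_of_ker_le {S : Matrix n m 𝕜} {L : Matrix m n 𝕜} (hLS : L * S = 1)
    {W : Matrix n n 𝕜} (hW : W.IsHermitian)
    (hker : ∀ x, (S * Sᴴ) *ᵥ x = 0 → W *ᵥ x = 0) : S * L * W = W := by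
  classical
  have hWLS : W * (Lᴴ * Sᴴ) = W := by
    refine ext_of_mulVec_single fun i => ?_
    have hfix : (S * Sᴴ) * (Lᴴ * Sᴴ) = S * Sᴴ := by
      rw [← conjTranspose_mul, Matrix.mul_assoc, ← conjTranspose_mul, Matrix.mul_assoc, hLS,
        Matrix.mul_one]
    have h := hker ((Lᴴ * Sᴴ) *ᵥ Pi.single i 1 - Pi.single i 1) (by
      rw [mulVec_sub, mulVec_mulVec, hfix, sub_self])
    rwa [mulVec_sub, mulVec_mulVec, sub_eq_zero] at h
  simpa only [conjTranspose_mul, conjTranspose_conjTranspose, hW.eq] using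
    congrArg conjTranspose hWLS

theorem mulVec_eq_zero_of_add_mulVec_eq_zero {X Y : Matrix n n 𝕜} (hX : X.PosSemidef)
    (hY : Y.PosSemidef) {x : n → 𝕜} (hx : (X + Y) *ᵥ x = 0) : Y *ᵥ x = 0 := by
  have hsum : star x ⬝ᵥ X *ᵥ x + star x ⬝ᵥ Y *ᵥ x = 0 := by
    rw [← dotProduct_add, ← add_mulVec, hx, dotProduct_zero]
  exact (hY.dotProduct_mulVec_zero_iff x).1 ((add_eq_zero_iff_of_nonneg
    (hX.dotProduct_mulVec_nonneg x) (hY.dotProduct_mulVec_nonneg x)).1 hsum).2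

theorem exists_add_mulVec_eq_mulVec {X Y : Matrix n n 𝕜} (hX : X.PosSemidef) (hY : Y.PosSemidef)
    (c : n → 𝕜) : ∃ u, (X + Y) *ᵥ u = Y *ᵥ c := by
  classical
  obtain ⟨r, S, L, hZ, hLS⟩ := exists_full_rank_factorization (hX.add hY)
  have hSLY : S * L * Y = Y := mul_mul_eq_of_ker_le hLS hY.isHermitian fun x hx =>
    mulVec_eq_zero_of_add_mulVec_eq_zero hX hY (by rwa [hZ])
  have hSL : Sᴴ * Lᴴ = 1 := by rw [← conjTranspose_mul, hLS, conjTranspose_one]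
  refine ⟨(Lᴴ * (L * Y)) *ᵥ c, ?_⟩
  rw [mulVec_mulVec]
  congr 1
  calc (X + Y) * (Lᴴ * (L * Y)) = S * (Sᴴ * Lᴴ) * (L * Y) := by simp only [hZ, Matrix.mul_assoc]
    _ = Y := by rw [hSL, Matrix.mul_one, ← Matrix.mul_assoc, hSLY]

theorem mul_eq_mul_of_lyapunov_posSemidef {F : Matrix n n 𝕜} {S : Matrix n m 𝕜}
    {L : Matrix m n 𝕜} (hLS : L * S = 1) (h : (lyapunov F (S * Sᴴ)).PosSemidef) :
    F * S = S * (L * F * S) := by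
  have hSL : Sᴴ * Lᴴ = 1 := by rw [← conjTranspose_mul, hLS, conjTranspose_one]
  have hker : ∀ x, (S * Sᴴ) *ᵥ x = 0 → lyapunov F (S * Sᴴ) *ᵥ x = 0 := by
    intro x hx
    have hx' : star x ᵥ* (S * Sᴴ) = 0 := by
      simpa [star_mulVec] using congrArg star hx
    refine (h.dotProduct_mulVec_zero_iff x).1 ?_
    rw [lyapunov_apply, add_mulVec, ← mulVec_mulVec, hx, mulVec_zero, zero_add,
      ← mulVec_mulVec, dotProduct_mulVec, hx', zero_dotProduct]
  have hFS : F * S = (lyapunov F (S * Sᴴ) - S * Sᴴ * Fᴴ) * Lᴴ := by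
    rw [lyapunov_apply, add_sub_cancel_right, Matrix.mul_assoc, Matrix.mul_assoc, hSL,
      Matrix.mul_one]
  have hSLS : S * L * S = S := by rw [Matrix.mul_assoc, hLS, Matrix.mul_one]
  calc F * S = S * L * (F * S) := by
        rw [hFS, Matrix.sub_mul, Matrix.mul_sub]
        simp only [← Matrix.mul_assoc, mul_mul_eq_of_ker_le hLS h.isHermitian hker, hSLS]
    _ = S * (L * F * S) := by simp only [Matrix.mul_assoc]

theorem mul_lyapunov_mul_conjTranspose {F : Matrix n n 𝕜} {S : Matrix n m 𝕜}
    {L : Matrix m n 𝕜} (hLS : L * S = 1) :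
    L * lyapunov F (S * Sᴴ) * Lᴴ = L * F * S + (L * F * S)ᴴ := by
  have hSL : Sᴴ * Lᴴ = 1 := by rw [← conjTranspose_mul, hLS, conjTranspose_one]
  simp only [lyapunov_apply, conjTranspose_mul, Matrix.mul_add, Matrix.add_mul]
  congr 1
  · simp only [Matrix.mul_assoc, hSL, Matrix.mul_one]
  · simp only [← Matrix.mul_assoc, hLS, Matrix.one_mul]

end FullRankFactorization

section ComplexLyapunov

open scoped ComplexOrder

open Complex

variable {n : Type*} [Fintype n] {F Z : Matrix n n ℂ}

theorem exists_eigenvector_re_nonneg_of_lyapunov_posSemidef (hZ : Z.PosSemidef) (hZ0 : Z ≠ 0)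
    (h : (lyapunov F Z).PosSemidef) :
    ∃ (μ : ℂ) (z : n → ℂ), z ≠ 0 ∧ F *ᵥ z = μ • z ∧ 0 ≤ μ.re := by
  obtain ⟨r, S, L, rfl, hLS⟩ := exists_full_rank_factorization hZ
  have : Nonempty (Fin r) := by
    by_contra hempty
    rw [not_nonempty_iff] at hempty
    exact hZ0 (by ext i j; simp [mul_apply])
  set K := L * F * S
  have hKpsd : (K + Kᴴ).PosSemidef := by
    simpa only [mul_lyapunov_mul_conjTranspose hLS] using h.mul_mul_conjTranspose_same L
  obtain ⟨μ, hμ⟩ := Module.End.exists_eigenvalue (toLin' K)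
  obtain ⟨x, hx⟩ := hμ.exists_hasEigenvector
  have hKx : K *ᵥ x = μ • x := hx.apply_eq_smul
  refine ⟨μ, S *ᵥ x, fun hSx => hx.2 ?_, ?_, ?_⟩
  · rw [← one_mulVec x, ← hLS, ← mulVec_mulVec, hSx, mulVec_zero]
  · rw [mulVec_mulVec, mul_eq_mul_of_lyapunov_posSemidef hLS h, ← mulVec_mulVec, hKx, mulVec_smul]
  · have hxx : 0 < (star x ⬝ᵥ x).re :=
      (Complex.lt_def.1 (dotProduct_star_self_pos_iff.2 hx.2)).1
    have hform : star x ⬝ᵥ (K + Kᴴ) *ᵥ x = (2 * μ.re : ℝ) * (star x ⬝ᵥ x) := by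
      rw [add_mulVec, dotProduct_add, hKx, dotProduct_mulVec (star x) Kᴴ, ← star_mulVec, hKx,
        star_smul, smul_dotProduct, dotProduct_smul, ← add_smul, smul_eq_mul]
      congr 1
      exact add_conj μ
    have hre : 0 ≤ 2 * μ.re * (star x ⬝ᵥ x).re := by
      simpa only [hform, RCLike.re_to_complex, re_ofReal_mul] using hKpsd.re_dotProduct_nonneg x
    linarith [nonneg_of_mul_nonneg_left hre hxx]

theorem exists_sum_vecMulVec_of_lyapunov_eq_zero (hZ : Z.PosSemidef) (h : lyapunov F Z = 0) :
    ∃ (r : ℕ) (z : Fin r → n → ℂ) (ω : Fin r → ℝ),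
      Z = ∑ k, vecMulVec (z k) (star (z k)) ∧ ∀ k, z k ≠ 0 ∧ F *ᵥ z k = (ω k * I) • z k := by
  obtain ⟨r, S, L, rfl, hLS⟩ := exists_full_rank_factorization hZ
  set K := L * F * S
  have hFS : F * S = S * K :=
    mul_eq_mul_of_lyapunov_posSemidef hLS (by rw [h]; exact PosSemidef.zero)
  have hskew : Kᴴ = -K := by
    rw [eq_neg_iff_add_eq_zero, add_comm, ← mul_lyapunov_mul_conjTranspose hLS, h, Matrix.mul_zero,
      Matrix.zero_mul]
  have hherm : (I • K).IsHermitian := by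
    rw [IsHermitian, conjTranspose_smul, hskew, star_def, conj_I, smul_neg, neg_smul, neg_neg]
  set V : Matrix (Fin r) (Fin r) ℂ := ↑hherm.eigenvectorUnitary
  have hVV : V * Vᴴ = 1 := Unitary.coe_mul_star_self hherm.eigenvectorUnitary
  have hKV (k) : K *ᵥ V.col k = ((-hherm.eigenvalues k : ℝ) * I) • V.col k := by
    have hIK := congrArg (-I • ·) (hherm.mulVec_eigenvectorBasis k)
    simp only [smul_mulVec, smul_smul, neg_mul, I_mul_I, neg_neg, one_smul] at hIK
    rw [hherm.eigenvectorUnitary_col_eq, hIK, ← Complex.coe_smul, smul_smul]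
    congr 1
    push_cast
    ring
  refine ⟨r, fun k => S *ᵥ V.col k, fun k => -hherm.eigenvalues k, ?_, fun k => ⟨fun hSV => ?_, ?_⟩⟩
  · calc S * Sᴴ = S * V * (S * V)ᴴ := by
          rw [conjTranspose_mul, Matrix.mul_assoc, ← Matrix.mul_assoc V, hVV, Matrix.one_mul]
      _ = _ := mul_conjTranspose_self_eq_sum_vecMulVec (S * V)
  · have hVk : V.col k = 0 := by
      rw [← one_mulVec (V.col k), ← hLS, ← mulVec_mulVec, show S *ᵥ V.col k = 0 from hSV,
        mulVec_zero]
    exact hherm.eigenvectorBasis.orthonormal.ne_zero k (WithLp.ofLp_injective 2 hVk)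
  · rw [mulVec_mulVec, hFS, ← mulVec_mulVec, hKV, mulVec_smul]

end ComplexLyapunov

section FrequencyInequality

open scoped ComplexOrder

open Complex

variable {n : Type*} [Fintype n]

theorem dotProduct_mulVec_nonneg_of_add_mulVec_eq {𝕜 : Type*} [RCLike 𝕜] {X Y : Matrix n n 𝕜}
    (hX : X.PosSemidef) (hY : Y.PosSemidef) {c u : n → 𝕜} (hu : (X + Y) *ᵥ u = Y *ᵥ c) :
    0 ≤ star (c - u) ⬝ᵥ (X + Y) *ᵥ u := by
  have hYcu : Y *ᵥ (c - u) = X *ᵥ u := by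
    rw [mulVec_sub, ← hu, add_mulVec, add_sub_cancel_right]
  have hcross : star (c - u) ⬝ᵥ Y *ᵥ u = star u ⬝ᵥ X *ᵥ u := by
    rw [dotProduct_mulVec, ← hY.1.eq, ← star_mulVec, hYcu, star_mulVec, hX.1.eq,
      ← dotProduct_mulVec]
  calc 0 ≤ star (c - u) ⬝ᵥ Y *ᵥ (c - u) + star u ⬝ᵥ X *ᵥ u :=
        add_nonneg (hY.dotProduct_mulVec_nonneg _) (hX.dotProduct_mulVec_nonneg _)
    _ = star (c - u) ⬝ᵥ (X + Y) *ᵥ u := by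
        rw [hu, ← hcross, ← dotProduct_add, ← mulVec_add, sub_add_cancel]

theorem lyapunov_sub_vecMulVec {R : Type*} [CommRing R] [StarRing R] {A B X Y : Matrix n n R}
    {b c u : n → R} (hX : X.IsHermitian) (hY : Y.IsHermitian)
    (hAB : A - B = vecMulVec b (star c)) (hu : (X + Y) *ᵥ u = Y *ᵥ c) :
    lyapunov (A - vecMulVec b (star u)) (X + Y) = lyapunov A X + lyapunov B Y := by
  have hmul : (A - vecMulVec b (star u)) * (X + Y) = A * X + B * Y := by
    have hbu : vecMulVec b (star u) * (X + Y) = vecMulVec b (star c) * Y := by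
      rw [vecMulVec_mul, vecMulVec_mul, ← (hX.add hY).eq, ← star_mulVec, hu, star_mulVec, hY.eq]
    rw [Matrix.sub_mul, hbu, ← hAB, Matrix.sub_mul, Matrix.mul_add]
    abel
  have hmul' := congrArg conjTranspose hmul
  rw [conjTranspose_mul, (hX.add hY).eq, conjTranspose_add, conjTranspose_mul, conjTranspose_mul,
    hX.eq, hY.eq] at hmul'
  rw [lyapunov_apply, hmul, hmul', lyapunov_apply, lyapunov_apply]
  abel

theorem exists_frequency_of_lyapunov_add_eq_zero {A B X Y : Matrix n n ℂ} {b c : n → ℂ}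
    (hX : X.PosSemidef) (hY : Y.PosSemidef) (hXY : X + Y ≠ 0)
    (hAB : A - B = vecMulVec b (star c)) (h : lyapunov A X + lyapunov B Y = 0) :
    ∃ (ω : ℝ) (z : n → ℂ) (s : ℂ),
      z ≠ 0 ∧ A *ᵥ z = (ω * I) • z + s • b ∧ normSq s ≤ ((star c ⬝ᵥ z) * star s).re := by
  obtain ⟨u, hu⟩ := exists_add_mulVec_eq_mulVec hX hY c
  obtain ⟨r, z, ω, hZ, hz⟩ := exists_sum_vecMulVec_of_lyapunov_eq_zero (hX.add hY)
    ((lyapunov_sub_vecMulVec hX.1 hY.1 hAB hu).trans h)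
  have hr : (Finset.univ : Finset (Fin r)).Nonempty := by
    by_contra hempty
    rw [Finset.not_nonempty_iff_eq_empty] at hempty
    exact hXY (by rw [hZ, hempty, Finset.sum_empty])
  have hterm (k) : star (c - u) ⬝ᵥ vecMulVec (z k) (star (z k)) *ᵥ u =
      star (c - u) ⬝ᵥ z k * star (star u ⬝ᵥ z k) := by
    rw [vecMulVec_mulVec, op_smul_eq_smul, dotProduct_smul, smul_eq_mul, mul_comm,
      star_dotProduct (z k)]
  have hsum : ∑ _k : Fin r, (0 : ℝ) ≤ ∑ k, (star (c - u) ⬝ᵥ z k * star (star u ⬝ᵥ z k)).re := by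
    have hform := (Complex.le_def.1 (dotProduct_mulVec_nonneg_of_add_mulVec_eq hX hY hu)).1
    simpa only [hZ, sum_mulVec, dotProduct_sum, re_sum, hterm, zero_re,
      Finset.sum_const_zero] using hform
  obtain ⟨k, -, hk⟩ := Finset.exists_le_of_sum_le hr hsum
  refine ⟨ω k, z k, star u ⬝ᵥ z k, (hz k).1, ?_, ?_⟩
  · have hFz := (hz k).2
    rw [sub_mulVec, vecMulVec_mulVec, op_smul_eq_smul, sub_eq_iff_eq_add] at hFz
    exact hFz
  · have hss : ((star u ⬝ᵥ z k) * star (star u ⬝ᵥ z k)).re = normSq (star u ⬝ᵥ z k) := by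
      rw [star_def, mul_conj, ofReal_re]
    rw [star_sub, sub_dotProduct, sub_mul, sub_re, hss] at hk
    simpa using hk

end FrequencyInequality

section Duality

variable {n ι : Type*}

theorem isClosed_setOf_posSemidef [Finite n] : IsClosed {X : Matrix n n ℝ | X.PosSemidef} := by
  have := Fintype.ofFinite n
  simp only [posSemidef_iff_dotProduct_mulVec, Set.ofPred_and, Set.ofPred_forall]
  exact (isClosed_eq (by fun_prop) (by fun_prop)).inter
    (isClosed_iInter fun x => isClosed_le (by fun_prop) (by fun_prop))

variable [Fintype n]

theorem abs_apply_le_trace {X : Matrix n n ℝ} (hX : X.PosSemidef) (i j : n) :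
    |X i j| ≤ X.trace := by
  classical
  have hdiag (k) : X k k ≤ X.trace :=
    Finset.single_le_sum (f := fun k => X k k) (fun k _ => hX.diag_nonneg) (Finset.mem_univ k)
  have hsymm : X j i = X i j := congrFun (congrFun hX.1 i) j
  have hadd := hX.dotProduct_mulVec_nonneg (Pi.single i 1 + Pi.single j 1)
  have hsub := hX.dotProduct_mulVec_nonneg (Pi.single i 1 - Pi.single j 1)
  simp only [star_trivial, mulVec_add, mulVec_sub, mulVec_single_one, add_dotProduct,
    sub_dotProduct, dotProduct_add, dotProduct_sub, single_one_dotProduct, col_apply,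
    hsymm] at hadd hsub
  rw [abs_le]
  constructor <;> linarith [hdiag i, hdiag j]

theorem exists_linearMap_eq_trace_mul {R : Type*} [CommRing R] (f : Matrix n n R →ₗ[R] R) :
    ∃ P : Matrix n n R, ∀ M, f M = (P * M).trace := by
  classical
  refine ⟨of fun j i => f (single i j 1), fun M => LinearMap.congr_fun
    (g := traceLinearMap n R R ∘ₗ LinearMap.mulLeft R (of fun j i => f (single i j 1))) ?_ M⟩
  refine ext_linearMap R fun i j => LinearMap.ext_ring ?_
  simp [trace_mul_single]

theorem isCompact_setOf_posSemidef_sum_trace_eq_one [Fintype ι] :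
    IsCompact {X : ι → Matrix n n ℝ | (∀ i, (X i).PosSemidef) ∧ ∑ i, (X i).trace = 1} := by
  have hbox : IsCompact (Set.univ.pi fun _ : ι => Set.univ.pi fun _ : n =>
      Set.univ.pi fun _ : n => Set.Icc (-1 : ℝ) 1) :=
    isCompact_univ_pi fun _ => isCompact_univ_pi fun _ => isCompact_univ_pi fun _ => isCompact_Icc
  refine hbox.of_isClosed_subset ?_ ?_
  · simp only [Set.ofPred_and, Set.ofPred_forall]
    exact (isClosed_iInter fun i => isClosed_setOf_posSemidef.preimage (continuous_apply i)).inter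
      (isClosed_eq (f := fun X : ι → Matrix n n ℝ => ∑ i, (X i).trace) (by fun_prop)
        continuous_const)
  · rintro X ⟨hX, htr⟩ k _ i _ j _
    refine abs_le.1 ((abs_apply_le_trace (hX k) i j).trans ?_)
    rw [← htr]
    exact Finset.single_le_sum (f := fun k => trace (X k)) (fun k _ => (hX k).trace_nonneg)
      (Finset.mem_univ k)

theorem convex_setOf_posSemidef_sum_trace_eq_one [Fintype ι] :
    Convex ℝ {X : ι → Matrix n n ℝ | (∀ i, (X i).PosSemidef) ∧ ∑ i, (X i).trace = 1} := by
  rintro X ⟨hX, hXtr⟩ Y ⟨hY, hYtr⟩ a b ha hb hab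
  refine ⟨fun i => ((hX i).smul ha).add ((hY i).smul hb), ?_⟩
  simp only [Pi.add_apply, Pi.smul_apply, trace_add, trace_smul, Finset.sum_add_distrib,
    smul_eq_mul, ← Finset.mul_sum, hXtr, hYtr, mul_one, hab]

theorem exists_trace_mul_neg [Finite ι] (T : (ι → Matrix n n ℝ) →ₗ[ℝ] Matrix n n ℝ)
    (hT : ∀ X : ι → Matrix n n ℝ, (∀ i, (X i).PosSemidef) → T X = 0 → X = 0) :
    ∃ P : Matrix n n ℝ, ∀ X : ι → Matrix n n ℝ,
      (∀ i, (X i).PosSemidef) → X ≠ 0 → (P * T X).trace < 0 := by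
  have := Fintype.ofFinite ι
  have : LocallyConvexSpace ℝ (Matrix n n ℝ) := inferInstanceAs (LocallyConvexSpace ℝ (n → n → ℝ))
  set K := {X : ι → Matrix n n ℝ | (∀ i, (X i).PosSemidef) ∧ ∑ i, (X i).trace = 1}
  have hcompact : IsCompact (T '' K) :=
    isCompact_setOf_posSemidef_sum_trace_eq_one.image T.continuous_of_finiteDimensional
  have hzero : (0 : Matrix n n ℝ) ∉ T '' K := by
    rintro ⟨X, ⟨hX, htr⟩, hTX⟩
    simp [hT X hX hTX] at htr
  obtain ⟨f, r, hf, hr⟩ := geometric_hahn_banach_closed_point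
    (convex_setOf_posSemidef_sum_trace_eq_one.linear_image T) hcompact.isClosed hzero
  obtain ⟨P, hP⟩ := exists_linearMap_eq_trace_mul f.toLinearMap
  refine ⟨P, fun X hX hX0 => ?_⟩
  have htr_nonneg (i) : 0 ≤ (X i).trace := (hX i).trace_nonneg
  set t := ∑ i, (X i).trace
  have ht : 0 < t := by
    refine (Finset.sum_nonneg fun i _ => htr_nonneg i).lt_of_ne' fun ht0 => hX0 (funext fun i => ?_)
    exact (hX i).trace_eq_zero_iff.1
      ((Finset.sum_eq_zero_iff_of_nonneg fun i _ => htr_nonneg i).1 ht0 i (Finset.mem_univ i))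
  have hneg : f (T (t⁻¹ • X)) < 0 := by
    refine (hf _ ⟨_, ⟨fun i => (hX i).smul (inv_nonneg.2 ht.le), ?_⟩, rfl⟩).trans
      (by simpa using hr)
    simp only [trace_smul, smul_eq_mul, ← Finset.mul_sum]
    exact inv_mul_cancel₀ ht.ne'
  rw [map_smul, map_smul, smul_eq_mul] at hneg
  rw [← hP]
  exact neg_of_mul_neg_right hneg (inv_nonneg.2 ht.le)

theorem exists_neg_lyapunov_posDef [Fintype ι] (A : ι → Matrix n n ℝ)
    (hA : ∀ X : ι → Matrix n n ℝ,
      (∀ i, (X i).PosSemidef) → ∑ i, lyapunov (A i) (X i) = 0 → X = 0) :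
    ∃ Q : Matrix n n ℝ, Q.IsHermitian ∧ ∀ i, (-lyapunov (A i)ᴴ Q).PosDef := by
  classical
  obtain ⟨P, hP⟩ := exists_trace_mul_neg
    (∑ i, lyapunov (A i) ∘ₗ LinearMap.proj i) (by simpa using hA)
  have hQ : (P + Pᴴ).IsHermitian := isHermitian_add_transpose_self P
  refine ⟨P + Pᴴ, hQ, fun i => .of_dotProduct_mulVec_pos (isHermitian_lyapunov _ hQ).neg
    fun x hx => ?_⟩
  have hxx : (vecMulVec x x).PosSemidef := by simpa using posSemidef_vecMulVec_self_star x
  set H := lyapunov (A i) (vecMulVec x x)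
  have hH : Hᴴ = H := isHermitian_lyapunov _ hxx.1
  have hneg : (P * H).trace < 0 := by
    have hsingle (j) : ((Pi.single i (vecMulVec x x) : ι → Matrix n n ℝ) j).PosSemidef := by
      obtain rfl | hij := eq_or_ne j i
      · rwa [Pi.single_eq_same]
      · rw [Pi.single_eq_of_ne hij]
        exact .zero
    have := hP _ hsingle (by simpa [vecMulVec_eq_zero] using hx)
    rwa [LinearMap.sum_apply, Fintype.sum_eq_single i (fun j hij => by
      simp [Pi.single_eq_of_ne hij]), LinearMap.comp_apply, LinearMap.proj_apply,
      Pi.single_eq_same] at this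
  have hform : star x ⬝ᵥ (-lyapunov (A i)ᴴ (P + Pᴴ)) *ᵥ x = -2 * (P * H).trace := by
    have hPH : (Pᴴ * H).trace = (P * H).trace := by
      rw [← hH, ← conjTranspose_mul, trace_conjTranspose, hH, trace_mul_comm, star_trivial]
    rw [neg_mulVec, dotProduct_neg, star_trivial, ← trace_mul_vecMulVec, ← trace_mul_lyapunov,
      add_mul, trace_add, hPH]
    ring
  linarith

end Duality

section Complexification

open scoped ComplexOrder

variable {n 𝕜 : Type*} [RCLike 𝕜]

theorem map_algebraMap_ne_zero_iff {m : Type*} {X : Matrix m n ℝ} :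
    X.map (algebraMap ℝ 𝕜) ≠ 0 ↔ X ≠ 0 := by
  rw [← Matrix.map_zero (algebraMap ℝ 𝕜) (map_zero _),
    (Matrix.map_injective (algebraMap ℝ 𝕜).injective).ne_iff]

theorem map_algebraMap_conjTranspose {m : Type*} (X : Matrix m n ℝ) :
    Xᴴ.map (algebraMap ℝ 𝕜) = (X.map (algebraMap ℝ 𝕜))ᴴ :=
  conjTranspose_map _ fun x => by simp

theorem posSemidef_map_algebraMap [Finite n] {X : Matrix n n ℝ} (hX : X.PosSemidef) :
    (X.map (algebraMap ℝ 𝕜)).PosSemidef := by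
  have := Fintype.ofFinite n
  obtain ⟨r, S, -, rfl, -⟩ := exists_full_rank_factorization hX
  rw [Matrix.map_mul, map_algebraMap_conjTranspose]
  exact posSemidef_self_mul_conjTranspose _

theorem lyapunov_map_algebraMap [Fintype n] (A X : Matrix n n ℝ) :
    lyapunov (A.map (algebraMap ℝ 𝕜)) (X.map (algebraMap ℝ 𝕜)) =
      (lyapunov A X).map (algebraMap ℝ 𝕜) := by
  rw [lyapunov_apply, lyapunov_apply, Matrix.map_add _ (map_add _), Matrix.map_mul,
    Matrix.map_mul, map_algebraMap_conjTranspose]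

end Complexification

section DefinitePencil

open scoped ComplexOrder MatrixOrder Matrix.Norms.L2Operator

variable {n 𝕜 : Type*} [Fintype n] [RCLike 𝕜] {P Q : Matrix n n 𝕜}

theorem exists_mulVec_eq_smul_mulVec_of_not_posDef (hP : P.PosDef) (hQ : Q.IsHermitian)
    (hQ' : ¬ Q.PosDef) : ∃ (r : ℝ) (x : n → 𝕜), r ≤ 0 ∧ x ≠ 0 ∧ Q *ᵥ x = r • P *ᵥ x := by
  classical
  obtain ⟨_, ⟨R, rfl⟩, rfl⟩ := CStarAlgebra.isStrictlyPositive_iff_eq_star_mul_self.1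
    (isStrictlyPositive_iff_posDef.2 hP)
  set M := star ((R⁻¹ : (Matrix n n 𝕜)ˣ) : Matrix n n 𝕜) * Q *
    ((R⁻¹ : (Matrix n n 𝕜)ˣ) : Matrix n n 𝕜) with hM
  have hMherm : M.IsHermitian := isHermitian_conjTranspose_mul_mul _ hQ
  have hM' : ¬ M.PosDef := by rwa [hM, IsUnit.posDef_star_left_conjugate_iff R⁻¹.isUnit]
  rw [hMherm.posDef_iff_eigenvalues_pos] at hM'
  push Not at hM'
  obtain ⟨i, hi⟩ := hM'
  set u : n → 𝕜 := (hMherm.eigenvectorBasis i).ofLp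
  have hu : u ≠ 0 := fun h =>
    hMherm.eigenvectorBasis.orthonormal.ne_zero i (WithLp.ofLp_injective 2 h)
  have hQR : Q * ((R⁻¹ : (Matrix n n 𝕜)ˣ) : Matrix n n 𝕜) = star (R : Matrix n n 𝕜) * M := by
    rw [hM, Matrix.mul_assoc, ← Matrix.mul_assoc, ← star_mul, Units.inv_mul, star_one,
      Matrix.one_mul]
  refine ⟨hMherm.eigenvalues i, (↑R⁻¹ : Matrix n n 𝕜) *ᵥ u, hi, fun h => hu ?_, ?_⟩
  · rw [← one_mulVec u, ← R.mul_inv, ← mulVec_mulVec, h, mulVec_zero]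
  · rw [mulVec_mulVec, hQR, ← mulVec_mulVec, hMherm.mulVec_eigenvectorBasis, mulVec_smul,
      mulVec_mulVec, Matrix.mul_assoc, R.mul_inv, Matrix.mul_one]

end DefinitePencil

section Stability

open scoped ComplexOrder

open Complex

variable {n : ℕ} {A B : Matrix (Fin n) (Fin n) ℝ}

theorem IsStable.re_neg_of_mulVec_eq_smul (hA : IsStable A) {μ : ℂ} {z : Fin n → ℂ} (hz : z ≠ 0)
    (h : A.map (algebraMap ℝ ℂ) *ᵥ z = μ • z) : μ.re < 0 := by
  refine hA μ (spectrum.mem_iff.2 fun hunit => hz (mulVec_injective_of_isUnit hunit ?_))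
  simp only [sub_mulVec, mulVec_zero, h, Algebra.algebraMap_eq_smul_one, smul_mulVec, one_mulVec,
    sub_self]

theorem IsStable.eq_zero_of_lyapunov_posSemidef (hA : IsStable A) {X : Matrix (Fin n) (Fin n) ℝ}
    (hX : X.PosSemidef) (h : (lyapunov A X).PosSemidef) : X = 0 := by
  by_contra hX0
  obtain ⟨μ, z, hz, hAz, hμ⟩ := exists_eigenvector_re_nonneg_of_lyapunov_posSemidef
    (posSemidef_map_algebraMap (𝕜 := ℂ) hX) (map_algebraMap_ne_zero_iff.2 hX0)
    (by rw [lyapunov_map_algebraMap]; exact posSemidef_map_algebraMap h)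
  exact (hA.re_neg_of_mulVec_eq_smul hz hAz).not_ge hμ

theorem IsStable.isUnit_map_add_smul_one (hA : IsStable A) {μ : ℂ} (hμ : μ.re ≤ 0) :
    IsUnit (A.map (algebraMap ℝ ℂ) + μ • 1) := by
  have h : -μ ∉ spectrum ℂ (A.map (algebraMap ℝ ℂ)) := fun h => by
    simpa using (hA _ h).trans_le' (neg_nonneg.2 hμ)
  rw [spectrum.notMem_iff, Algebra.algebraMap_eq_smul_one, ← IsUnit.neg_iff] at h
  simpa [add_comm] using h

theorem IsStable.isUnit (hA : IsStable A) : IsUnit A := by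
  have h := hA.isUnit_map_add_smul_one (μ := 0) le_rfl
  rw [zero_smul, add_zero, isUnit_iff_isUnit_det, isUnit_iff_ne_zero, ← RingHom.mapMatrix_apply,
    ← RingHom.map_det, map_ne_zero] at h
  exact (isUnit_iff_isUnit_det A).2 h.isUnit

theorem IsStable.det_sq_smul_one_add_mul_self_pos (hA : IsStable A) (ω : ℝ) :
    0 < (ω ^ 2 • 1 + A * A).det := by
  set C := A.map (algebraMap ℝ ℂ)
  have hconj : (C + (ω * I) • 1).map (starRingEnd ℂ) = C - (ω * I) • 1 := by
    ext i j
    obtain rfl | hij := eq_or_ne i j <;> simp [C, sub_eq_add_neg, *]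
  have hfac : (ω ^ 2 • 1 + A * A).map (algebraMap ℝ ℂ) =
      (C + (ω * I) • 1) * (C + (ω * I) • 1).map (starRingEnd ℂ) := by
    have hsq : (ω ^ 2 • 1 : Matrix (Fin n) (Fin n) ℝ).map (algebraMap ℝ ℂ) =
        -((ω * I) * (ω * I)) • 1 := by
      rw [mul_mul_mul_comm, I_mul_I, mul_neg_one, neg_neg, smul_one_eq_diagonal,
        smul_one_eq_diagonal, diagonal_map (map_zero _)]
      simp [sq]
    rw [hconj, Matrix.map_add _ (map_add _), hsq, Matrix.map_mul, Matrix.mul_sub, Matrix.add_mul,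
      Matrix.add_mul, Matrix.mul_smul, smul_mul_smul, Matrix.smul_mul, Matrix.mul_one,
      Matrix.one_mul, Matrix.one_mul, neg_smul]
    abel
  have hdet : (((ω ^ 2 • 1 + A * A).det : ℝ) : ℂ) = normSq (C + (ω * I) • 1).det := by
    rw [← coe_algebraMap, RingHom.map_det, RingHom.mapMatrix_apply, hfac, det_mul,
      ← RingHom.mapMatrix_apply, ← RingHom.map_det, mul_conj]
    rfl
  rw [ofReal_inj] at hdet
  rw [hdet, normSq_pos]
  exact ((isUnit_iff_isUnit_det _).1 (hA.isUnit_map_add_smul_one (by simp))).ne_zero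

theorem IsStable.exists_posDef_neg_lyapunov_posDef (hA : IsStable A) :
    ∃ P : Matrix (Fin n) (Fin n) ℝ, P.PosDef ∧ (-lyapunov Aᴴ P).PosDef := by
  -- Positivity of `P` is itself a Lyapunov inequality, for the matrix `-1`.
  obtain ⟨P, -, hP⟩ := exists_neg_lyapunov_posDef ![A, -1] fun X hX h => by
    rw [Fin.sum_univ_two] at h
    have htwo : lyapunov A (X 0) = (2 : ℝ) • X 1 := by
      rw [← sub_eq_zero, sub_eq_add_neg, ← lyapunov_neg_one]
      exact h
    have hX₀ : X 0 = 0 :=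
      hA.eq_zero_of_lyapunov_posSemidef (hX 0) (htwo ▸ (hX 1).smul zero_le_two)
    have hX₁ : X 1 = 0 := by simpa [hX₀] using htwo.symm
    exact funext (Fin.forall_fin_two.2 ⟨hX₀, hX₁⟩)
  refine ⟨P, ?_, hP 0⟩
  have htwo : -lyapunov (-1)ᴴ P = (2 : ℝ) • P := by
    rw [conjTranspose_neg, conjTranspose_one, lyapunov_neg_one, neg_neg]
  have h : (-lyapunov (-1)ᴴ P).PosDef := hP 1
  rw [htwo] at h
  simpa using h.smul (inv_pos.2 (zero_lt_two' ℝ))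

theorem IsStable.posDef_of_neg_lyapunov_posDef (hA : IsStable A) {Q : Matrix (Fin n) (Fin n) ℝ}
    (hQ : Q.IsHermitian) (h : (-lyapunov Aᴴ Q).PosDef) : Q.PosDef := by
  by_contra hQ'
  obtain ⟨P, hP, hAP⟩ := hA.exists_posDef_neg_lyapunov_posDef
  obtain ⟨r, x, hr, hx, hQx⟩ := exists_mulVec_eq_smul_mulVec_of_not_posDef hP hQ hQ'
  have hpos := (h.add_posSemidef (hAP.posSemidef.smul (neg_nonneg.2 hr))).dotProduct_mulVec_pos hx
  have hsum : -lyapunov Aᴴ Q + -r • -lyapunov Aᴴ P = -lyapunov Aᴴ (Q - r • P) := by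
    rw [map_sub, map_smul, smul_neg, neg_smul, neg_neg, neg_sub, sub_eq_neg_add]
  have hker : (Q - r • P) *ᵥ x = 0 := by
    rw [sub_mulVec, hQx, smul_mulVec, sub_self]
  have hker' : x ᵥ* (Q - r • P) = 0 := by
    have hherm : (Q - r • P).IsHermitian := hQ.sub (hP.1.smul (.all r))
    rw [← hherm.eq, ← star_trivial x, ← star_mulVec, hker, star_zero]
  refine hpos.ne' ?_
  rw [hsum, lyapunov_apply, neg_mulVec, dotProduct_neg, add_mulVec, dotProduct_add,
    ← mulVec_mulVec, hker, mulVec_zero, dotProduct_zero, dotProduct_mulVec, ← vecMul_vecMul,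
    star_trivial, hker', zero_vecMul, zero_dotProduct, add_zero, neg_zero]

theorem IsStable.exists_lyapunov_add_lyapunov_eq_zero_of_not_hasCQLF (hA : IsStable A)
    (h : ¬ HasCQLF A B) :
    ∃ X Y : Matrix (Fin n) (Fin n) ℝ,
      X.PosSemidef ∧ Y.PosSemidef ∧ X + Y ≠ 0 ∧ lyapunov A X + lyapunov B Y = 0 := by
  by_contra! hXY
  obtain ⟨P, hP, hPpos⟩ := exists_neg_lyapunov_posDef ![A, B] fun X hX hsum => by
    have hX01 : X 0 + X 1 = 0 := by
      by_contra hne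
      exact hXY _ _ (hX 0) (hX 1) hne (by simpa [Fin.sum_univ_two] using hsum)
    have htr : (X 0).trace + (X 1).trace = 0 := by rw [← trace_add, hX01, trace_zero]
    have htr' := (add_eq_zero_iff_of_nonneg (hX 0).trace_nonneg (hX 1).trace_nonneg).1 htr
    exact funext (Fin.forall_fin_two.2
      ⟨(hX 0).trace_eq_zero_iff.1 htr'.1, (hX 1).trace_eq_zero_iff.1 htr'.2⟩)
  refine h ⟨P, hA.posDef_of_neg_lyapunov_posDef hP (hPpos 0), ?_, ?_⟩
  · simpa [lyapunov_apply, add_comm] using hPpos 0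
  · simpa [lyapunov_apply, add_comm] using hPpos 1

end Stability

section CircleCriterion

open Complex

theorem exists_le_det_smul_one_add_eq_zero {n : Type*} [Fintype n] [DecidableEq n]
    (M : Matrix n n ℝ) {s : ℝ} (hs : (s • 1 + M).det ≤ 0) :
    ∃ t, s ≤ t ∧ (t • 1 + M).det = 0 := by
  have heval (t : ℝ) : (-M).charpoly.eval t = (t • 1 + M).det := by
    rw [eval_charpoly, sub_neg_eq_add, smul_one_eq_diagonal, scalar_apply]
  have : Nonempty n := by
    by_contra hempty
    rw [not_nonempty_iff] at hempty
    exact hs.not_gt (by simp)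
  have hdeg : 0 < (-M).charpoly.degree := by
    rw [charpoly_degree_eq_dim]
    exact_mod_cast Fintype.card_pos
  have htop := Polynomial.tendsto_atTop_of_leadingCoeff_nonneg _ hdeg
    ((charpoly_monic (-M)).leadingCoeff.symm ▸ zero_le_one)
  obtain ⟨T, hT, hsT⟩ :=
    ((htop.eventually_ge_atTop 0).and (Filter.eventually_ge_atTop s)).exists
  obtain ⟨t, ht, ht0⟩ := intermediate_value_Icc hsT (-M).charpoly.continuous.continuousOn
    (show (0 : ℝ) ∈ Set.Icc _ _ from ⟨(heval s).trans_le hs, hT⟩)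
  exact ⟨t, ht.1, (heval t).symm.trans ht0⟩

theorem det_one_sub_vecMulVec {n R : Type*} [Fintype n] [DecidableEq n] [CommRing R]
    (p c : n → R) : (1 - vecMulVec p c).det = 1 - c ⬝ᵥ p := by
  rw [sub_eq_add_neg, ← neg_vecMulVec, vecMulVec_eq Unit,
    det_one_add_replicateCol_mul_replicateRow, dotProduct_neg, sub_eq_add_neg]

theorem det_sq_smul_one_add_mul {n R : Type*} [Fintype n] [DecidableEq n] [CommRing R]
    {A B : Matrix n n R} {b c p q : n → R} {ω : R} (hAB : A - B = vecMulVec b c)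
    (hp : A *ᵥ p = -(ω • q) + b) (hq : A *ᵥ q = ω • p) :
    (ω ^ 2 • 1 + A * B).det = (ω ^ 2 • 1 + A * A).det * (1 - c ⬝ᵥ p) := by
  have hres : (ω ^ 2 • 1 + A * A) *ᵥ p = A *ᵥ b := by
    rw [add_mulVec, smul_mulVec, one_mulVec, ← mulVec_mulVec, hp, mulVec_add, mulVec_neg,
      mulVec_smul, hq, smul_smul, sq]
    abel
  rw [← det_one_sub_vecMulVec, ← det_mul, mul_sub, mul_one, mul_vecMulVec, hres, ← mul_vecMulVec,
    ← hAB, mul_sub]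
  congr 1
  abel

theorem mulVec_re_and_mulVec_im_of_map_mulVec_eq {n : Type*} [Fintype n] {A : Matrix n n ℝ}
    {b : n → ℝ} {ω : ℝ} {y : n → ℂ}
    (h : A.map (algebraMap ℝ ℂ) *ᵥ y = (ω * I) • y + fun i => (b i : ℂ)) :
    A *ᵥ (fun i => (y i).re) = -(ω • fun i => (y i).im) + b ∧
      A *ᵥ (fun i => (y i).im) = ω • fun i => (y i).re := by
  constructor <;> ext i
  · simpa [mulVec, dotProduct] using congrArg re (congrFun h i)
  · simpa [mulVec, dotProduct] using congrArg im (congrFun h i)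

variable {n : ℕ} {A B : Matrix (Fin n) (Fin n) ℝ}

theorem IsStable.exists_frequency_response_of_lyapunov_add_eq_zero (hA : IsStable A)
    {X Y : Matrix (Fin n) (Fin n) ℝ} {b c : Fin n → ℝ} (hX : X.PosSemidef) (hY : Y.PosSemidef)
    (hXY : X + Y ≠ 0) (hAB : A - B = vecMulVec b c) (h : lyapunov A X + lyapunov B Y = 0) :
    ∃ (ω : ℝ) (p q : Fin n → ℝ),
      A *ᵥ p = -(ω • q) + b ∧ A *ᵥ q = ω • p ∧ 1 ≤ c ⬝ᵥ p := by
  set b' : Fin n → ℂ := fun i => b i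
  set c' : Fin n → ℂ := fun i => c i
  have hXY' : X.map (algebraMap ℝ ℂ) + Y.map (algebraMap ℝ ℂ) ≠ 0 := by
    rwa [← Matrix.map_add _ (map_add _), map_algebraMap_ne_zero_iff]
  have hAB' : A.map (algebraMap ℝ ℂ) - B.map (algebraMap ℝ ℂ) = vecMulVec b' (star c') := by
    rw [← Matrix.map_sub _ (map_sub _), hAB]
    ext i j
    simp [vecMulVec_apply, b', c']
  have h' : lyapunov (A.map (algebraMap ℝ ℂ)) (X.map (algebraMap ℝ ℂ)) +
      lyapunov (B.map (algebraMap ℝ ℂ)) (Y.map (algebraMap ℝ ℂ)) = 0 := by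
    rw [lyapunov_map_algebraMap, lyapunov_map_algebraMap, ← Matrix.map_add _ (map_add _), h,
      Matrix.map_zero _ (map_zero _)]
  obtain ⟨ω, z, s, hz, hAz, hs⟩ := exists_frequency_of_lyapunov_add_eq_zero
    (A := A.map (algebraMap ℝ ℂ)) (B := B.map (algebraMap ℝ ℂ)) (b := b') (c := c')
    (posSemidef_map_algebraMap hX) (posSemidef_map_algebraMap hY) hXY' hAB' h'
  have hs0 : s ≠ 0 := by
    rintro rfl
    rw [zero_smul, add_zero] at hAz
    simpa using hA.re_neg_of_mulVec_eq_smul hz hAz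
  set y := s⁻¹ • z with hy
  have hAy : A.map (algebraMap ℝ ℂ) *ᵥ y = (ω * I) • y + b' := by
    rw [hy, mulVec_smul, hAz, smul_add, smul_comm, inv_smul_smul₀ hs0]
  have hcy : 1 ≤ (star c' ⬝ᵥ y).re := by
    have hnorm : star c' ⬝ᵥ z * star s = (normSq s : ℂ) * (star c' ⬝ᵥ y) := by
      rw [← mul_conj, hy, dotProduct_smul, smul_eq_mul, star_def]
      field_simp
    rw [hnorm, re_ofReal_mul] at hs
    exact (le_mul_iff_one_le_right (normSq_pos.2 hs0)).1 hs
  obtain ⟨hre, him⟩ := mulVec_re_and_mulVec_im_of_map_mulVec_eq hAy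
  exact ⟨ω, _, _, hre, him, by simpa [dotProduct, c'] using hcy⟩

end CircleCriterion

section RankOneIntersection

theorem exists_eq_vecMulVec_of_rank_le_one {m n K : Type*} [Fintype n] [Finite m] [Field K]
    {M : Matrix m n K} (hM : M.rank ≤ 1) : ∃ (b : m → K) (c : n → K), M = vecMulVec b c := by
  classical
  rw [rank, finrank_le_one_iff] at hM
  obtain ⟨b, hb⟩ := hM
  choose c hc using fun j => hb ⟨M.mulVecLin (Pi.single j 1), LinearMap.mem_range_self _ _⟩
  refine ⟨b, c, ?_⟩
  ext i j
  have hij := congrFun (congrArg Subtype.val (hc j)) i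
  simp only [SetLike.val_smul, Pi.smul_apply, mulVecLin_apply, mulVec_single_one, col_apply,
    smul_eq_mul] at hij
  rw [vecMulVec_apply, ← hij, mul_comm]

theorem exists_lyapunov_vecMulVec_add_eq_zero_of_det_eq_zero {n : Type*} [Fintype n]
    [DecidableEq n] {A B : Matrix n n ℝ} {t : ℝ} (ht : 0 < t) (hdet : (t • 1 + A * B).det = 0) :
    ∃ v w : n → ℝ, v ≠ 0 ∧ w ≠ 0 ∧
      lyapunov A (vecMulVec v v) + lyapunov B (vecMulVec w w) = 0 := by
  obtain ⟨w, hw, hABw⟩ := exists_mulVec_eq_zero_iff.2 hdet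
  rw [add_mulVec, smul_mulVec, one_mulVec, ← mulVec_mulVec, add_comm, ← eq_neg_iff_add_eq_zero]
    at hABw
  have hs : √t ≠ 0 := (Real.sqrt_pos.2 ht).ne'
  set v := (√t)⁻¹ • (B *ᵥ w) with hv
  have hBw : B *ᵥ w = √t • v := by rw [hv, smul_inv_smul₀ hs]
  have hAv : A *ᵥ v = -(√t • w) := by
    rw [hv, mulVec_smul, hABw, smul_neg, smul_smul, inv_mul_eq_div, Real.div_sqrt]
  refine ⟨v, w, fun hv0 => ?_, hw, ?_⟩
  · rw [hv0, mulVec_zero, eq_comm, neg_eq_zero, smul_eq_zero] at hAv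
    exact hAv.elim hs hw
  · simp only [lyapunov_apply, mul_vecMulVec, vecMulVec_mul, conjTranspose_eq_transpose_of_trivial,
      vecMul_transpose, hAv, hBw, neg_vecMulVec, vecMulVec_neg, smul_vecMulVec, vecMulVec_smul]
    abel

variable {n : ℕ} {A B : Matrix (Fin n) (Fin n) ℝ}

theorem HasCQLF.lyapunov_vecMulVec_add_ne_zero (h : HasCQLF A B) {v w : Fin n → ℝ} (hv : v ≠ 0)
    (hw : w ≠ 0) : lyapunov A (vecMulVec v v) + lyapunov B (vecMulVec w w) ≠ 0 := by
  obtain ⟨P, -, hPA, hPB⟩ := h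
  intro hvw
  have htr := congrArg (fun M => (P * M).trace) hvw
  simp only [mul_add, trace_add, trace_mul_lyapunov, trace_mul_vecMulVec, mul_zero,
    trace_zero] at htr
  have hposA := hPA.dotProduct_mulVec_pos hv
  have hposB := hPB.dotProduct_mulVec_pos hw
  simp only [star_trivial, neg_mulVec, dotProduct_neg] at hposA hposB
  simp only [lyapunov_apply, conjTranspose_eq_transpose_of_trivial, transpose_transpose,
    add_comm (Aᵀ * P), add_comm (Bᵀ * P)] at htr
  linarith

theorem IsStable.exists_lyapunov_vecMulVec_add_eq_zero_of_not_hasCQLF (hA : IsStable A)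
    (hB : IsUnit B) (hrank : (A - B).rank ≤ 1) (h : ¬ HasCQLF A B) :
    ∃ v w : Fin n → ℝ, v ≠ 0 ∧ w ≠ 0 ∧
      lyapunov A (vecMulVec v v) + lyapunov B (vecMulVec w w) = 0 := by
  obtain ⟨X, Y, hX, hY, hXY, hLXY⟩ :=
    hA.exists_lyapunov_add_lyapunov_eq_zero_of_not_hasCQLF h
  obtain ⟨b, c, hAB⟩ := exists_eq_vecMulVec_of_rank_le_one hrank
  obtain ⟨ω, p, q, hp, hq, hcp⟩ :=
    hA.exists_frequency_response_of_lyapunov_add_eq_zero hX hY hXY hAB hLXY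
  have hdet : (ω ^ 2 • 1 + A * B).det ≤ 0 := by
    rw [det_sq_smul_one_add_mul hAB hp hq]
    exact mul_nonpos_of_nonneg_of_nonpos (hA.det_sq_smul_one_add_mul_self_pos ω).le
      (sub_nonpos.2 hcp)
  obtain ⟨t, ht, ht0⟩ := exists_le_det_smul_one_add_eq_zero _ hdet
  refine exists_lyapunov_vecMulVec_add_eq_zero_of_det_eq_zero
    (((sq_nonneg ω).trans ht).lt_of_ne ?_) ht0
  rintro rfl
  rw [zero_smul, zero_add] at ht0
  exact ((isUnit_iff_isUnit_det _).1 (hA.isUnit.mul hB)).ne_zero ht0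

theorem no_CQLF_iff_rank_one_intersection_general {n : ℕ} (A B : Matrix (Fin n) (Fin n) ℝ)
    (hA : IsStable A) (hB : IsUnit B) (hrank : (A - B).rank ≤ 1) :
    ¬ HasCQLF A B ↔
      ∃ (v w : Fin n → ℝ), v ≠ 0 ∧ w ≠ 0 ∧
        A * vecMulVec v v + vecMulVec v v * Aᵀ + B * vecMulVec w w + vecMulVec w w * Bᵀ = 0 := by
  have hlyapunov (v w : Fin n → ℝ) :
      A * vecMulVec v v + vecMulVec v v * Aᵀ + B * vecMulVec w w + vecMulVec w w * Bᵀ =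
        lyapunov A (vecMulVec v v) + lyapunov B (vecMulVec w w) := add_assoc _ _ _
  simp only [hlyapunov]
  refine ⟨hA.exists_lyapunov_vecMulVec_add_eq_zero_of_not_hasCQLF hB hrank, ?_⟩
  rintro ⟨v, w, hv, hw, hvw⟩ h
  exact h.lyapunov_vecMulVec_add_ne_zero hv hw hvw

end RankOneIntersection

/-- For stable `A`, `B` with `A - B` of rank one: no CQLF exists iff there are nonzero
vectors `v`, `w` with `A·v·vᵀ + v·vᵀ·Aᵀ + B·w·wᵀ + w·wᵀ·Bᵀ = 0`. -/
theorem no_CQLF_iff_rank_one_intersection {n : ℕ} (A B : Matrix (Fin n) (Fin n) ℝ)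
    (hA : IsStable A) (hB : IsStable B) (hrank : (A - B).rank = 1) :
    ¬ HasCQLF A B ↔
      ∃ (v w : Fin n → ℝ), v ≠ 0 ∧ w ≠ 0 ∧
        A * vecMulVec v v + vecMulVec v v * Aᵀ + B * vecMulVec w w + vecMulVec w w * Bᵀ = 0 :=
  no_CQLF_iff_rank_one_intersection_general A B hA hB.isUnit hrank.le
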